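/- arXiv:2307.02941 — 2 statements merged into one kernel-verified Lean document; each statement's English description precedes it below -/
import Mathlib

section
/- (Key second-order inequality, noisy case.) Suppose all Z_i = I_r, so the cost matrix is L̂ = L ⊗ I_r − Δ. Let Y be a second-order critical point of the rank-p problem, set R = (1/n) Σ_{i=1}^n Y_i and W_i = Y_i − R, and let W ∈ ℝ^{rn×p} be the stack of the blocks W_i. Then (p − r − 2) Σ_{i,j=1}^n L_ij tr(Y_i Y_jᵀ) + (1/4) Σ_{i,j=1}^n A_ij ‖W_i − W_j‖_F⁴ ≤ 2(p + r − 2) ‖Δ‖ √(rn) ‖W‖_F, where ‖Δ‖ is the ℓ₂→ℓ₂ operator norm and ‖·‖_F the Frobenius norm. -/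
open Matrix MeasureTheory ProbabilityTheory
open scoped Kronecker BigOperators

namespace SyncPaper

variable {α : Type*}

/-- The `i`-th `r × p` row-block of a block matrix `Y ∈ α^{rn × p}`. -/
def blk {n r p : ℕ} (Y : Matrix (Fin n × Fin r) (Fin p) α) (i : Fin n) :
    Matrix (Fin r) (Fin p) α :=
  Matrix.of fun a b => Y (i, a) b

/-- `Y` is feasible: every `r × p` row-block has orthonormal rows. -/
def Feasible {n r p : ℕ} (Y : Matrix (Fin n × Fin r) (Fin p) ℝ) : Prop :=
  ∀ i, blk Y i * (blk Y i)ᵀ = 1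

/-- Symmetric block-diagonal projection: keeps the symmetric part of each `r × r`
diagonal block and zeroes out all off-diagonal blocks. -/
noncomputable def SBD {n r : ℕ} (M : Matrix (Fin n × Fin r) (Fin n × Fin r) ℝ) :
    Matrix (Fin n × Fin r) (Fin n × Fin r) ℝ :=
  Matrix.of fun q q' => if q.1 = q'.1 then (M q q' + M q' q) / 2 else 0

/-- The matrix `S(Y) = L̂ − SBD(L̂ Y Yᵀ)`. -/
noncomputable def Smat {n r p : ℕ} (Lhat : Matrix (Fin n × Fin r) (Fin n × Fin r) ℝ)
    (Y : Matrix (Fin n × Fin r) (Fin p) ℝ) :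
    Matrix (Fin n × Fin r) (Fin n × Fin r) ℝ :=
  Lhat - SBD (Lhat * Y * Yᵀ)

/-- Second-order critical point of the rank-`p` problem `min ⟨L̂, Y Yᵀ⟩` over feasible `Y`. -/
def IsSecondOrderCritical {n r p : ℕ} (Lhat : Matrix (Fin n × Fin r) (Fin n × Fin r) ℝ)
    (Y : Matrix (Fin n × Fin r) (Fin p) ℝ) : Prop :=
  Feasible Y ∧ Smat Lhat Y * Y = 0 ∧
    ∀ Ydot : Matrix (Fin n × Fin r) (Fin p) ℝ,
      (∀ i, blk Ydot i * (blk Y i)ᵀ + blk Y i * (blk Ydot i)ᵀ = 0) →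
      0 ≤ (Smat Lhat Y * Ydot * Ydotᵀ).trace

/-- The stacked ground truth `Z ∈ ℝ^{rn × r}`. -/
def Zstack {n r : ℕ} (Zb : Fin n → Matrix (Fin r) (Fin r) ℝ) :
    Matrix (Fin n × Fin r) (Fin r) ℝ :=
  Matrix.of fun q b => Zb q.1 q.2 b

/-- The block-diagonal matrix `D` with diagonal blocks `Z_1, …, Z_n`. -/
def Dmat {n r : ℕ} (Zb : Fin n → Matrix (Fin r) (Fin r) ℝ) :
    Matrix (Fin n × Fin r) (Fin n × Fin r) ℝ :=
  Matrix.of fun q q' => if q.1 = q'.1 then Zb q.1 q.2 q'.2 else 0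

/-- `L_Z = D (L ⊗ I_r) Dᵀ`. -/
def LZmat {n r : ℕ} (L : Matrix (Fin n) (Fin n) ℝ) (Zb : Fin n → Matrix (Fin r) (Fin r) ℝ) :
    Matrix (Fin n × Fin r) (Fin n × Fin r) ℝ :=
  Dmat Zb * (L ⊗ₖ (1 : Matrix (Fin r) (Fin r) ℝ)) * (Dmat Zb)ᵀ

/-- The ℓ₂→ℓ₂ operator norm of a matrix. -/
noncomputable def opNorm {m m' : Type*} [Fintype m] [Fintype m'] [DecidableEq m']
    (M : Matrix m m' ℝ) : ℝ :=
  ‖(Matrix.toEuclideanLin (𝕜 := ℝ) (m := m) (n := m')).trans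
      LinearMap.toContinuousLinearMap M‖

/-- The second-smallest eigenvalue of a connected graph Laplacian, via the variational
(Courant–Fischer) characterization: the minimum of the quadratic form over unit vectors
orthogonal to the all-ones vector. -/
noncomputable def lam2 {n : ℕ} (L : Matrix (Fin n) (Fin n) ℝ) : ℝ :=
  sInf {t : ℝ | ∃ x : Fin n → ℝ, (∑ i, x i = 0) ∧ (∑ i, (x i) ^ 2 = 1) ∧ t = x ⬝ᵥ (L *ᵥ x)}

/-- Squared Frobenius norm of a real matrix. -/
def frobSq {m m' : Type*} [Fintype m] [Fintype m'] (M : Matrix m m' ℝ) : ℝ :=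
  ∑ i, ∑ j, (M i j) ^ 2

/-- The inner product `⟨A, B⟩ = tr(A Bᵀ)`. -/
def ip {m : Type*} [Fintype m] (A B : Matrix m m ℝ) : ℝ := (A * Bᵀ).trace

/-- Feasibility for the SDP relaxation. -/
def SDPFeasible {n r : ℕ} (X : Matrix (Fin n × Fin r) (Fin n × Fin r) ℝ) : Prop :=
  X.PosSemidef ∧ SBD X = 1

end SyncPaper


namespace SyncPaper

lemma opNorm_nonneg' {q : Type*} [Fintype q] [DecidableEq q] (D : Matrix q q ℝ) : 0 ≤ opNorm D :=
  norm_nonneg _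

lemma dot_le {q : Type*} [Fintype q] [DecidableEq q] (D : Matrix q q ℝ) (x y : q → ℝ) :
    x ⬝ᵥ D *ᵥ y ≤ opNorm D * (Real.sqrt (∑ i, x i ^ 2) * Real.sqrt (∑ i, y i ^ 2)) := by
  have h1 := ContinuousLinearMap.le_opNorm ((Matrix.toEuclideanLin (𝕜 := ℝ) (m := q) (n := q)).trans
      LinearMap.toContinuousLinearMap D) (WithLp.toLp 2 y)
  have h2 := real_inner_le_norm (WithLp.toLp 2 x) (((Matrix.toEuclideanLin (𝕜 := ℝ) (m := q) (n := q)).trans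
      LinearMap.toContinuousLinearMap D) (WithLp.toLp 2 y))
  have h3 : inner ℝ (WithLp.toLp 2 x) (((Matrix.toEuclideanLin (𝕜 := ℝ) (m := q) (n := q)).trans
      LinearMap.toContinuousLinearMap D) (WithLp.toLp 2 y)) = x ⬝ᵥ D *ᵥ y := by
    simp [PiLp.inner_apply, dotProduct, mul_comm, Matrix.toLpLin_apply]
  have hx : ‖(WithLp.toLp 2 x : EuclideanSpace ℝ q)‖ = Real.sqrt (∑ i, x i ^ 2) := by
    simp [EuclideanSpace.norm_eq]
  have hy : ‖(WithLp.toLp 2 y : EuclideanSpace ℝ q)‖ = Real.sqrt (∑ i, y i ^ 2) := by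
    simp [EuclideanSpace.norm_eq]
  rw [h3] at h2
  rw [hy] at h1
  rw [hx] at h2
  refine h2.trans ((mul_le_mul_of_nonneg_left h1 (Real.sqrt_nonneg _)).trans (le_of_eq ?_))
  unfold opNorm
  ring

lemma fam_le {q k : Type*} [Fintype q] [DecidableEq q] [Fintype k] (D : Matrix q q ℝ)
    (X Z : k → q → ℝ) :
    ∑ c, X c ⬝ᵥ D *ᵥ Z c ≤
      opNorm D * (Real.sqrt (∑ c, ∑ i, X c i ^ 2) * Real.sqrt (∑ c, ∑ i, Z c i ^ 2)) := by
  refine (Finset.sum_le_sum fun c _ => dot_le D (X c) (Z c)).trans ?_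
  rw [← Finset.mul_sum]
  refine mul_le_mul_of_nonneg_left ?_ (opNorm_nonneg' D)
  exact Real.sum_sqrt_mul_sqrt_le _ (fun c => Finset.sum_nonneg fun i _ => sq_nonneg _)
    (fun c => Finset.sum_nonneg fun i _ => sq_nonneg _)

lemma scalar_ineq (c s : ℝ) (hc : c ≤ 1) (hs : s ^ 2 ≤ c) :
    Real.sqrt (1 + c - 2 * s) * Real.sqrt (1 + c + 2 * s) + (1 - c) ≤ 2 * Real.sqrt (1 - s ^ 2) := by
  have hc0 : 0 ≤ c := (sq_nonneg s).trans hs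
  have h1 : 0 ≤ 1 + c - 2 * s := by nlinarith [sq_nonneg (1 - s)]
  rw [← Real.sqrt_mul h1]
  set w := Real.sqrt (1 - s ^ 2) with hw
  have hw2 : w ^ 2 = 1 - s ^ 2 := Real.sq_sqrt (by linarith)
  have hw0 : 0 ≤ w := Real.sqrt_nonneg _
  have hw1 : w ≤ 1 := by nlinarith [sq_nonneg s]
  have : 0 ≤ 2 * w - (1 - c) := by nlinarith
  have h3 : Real.sqrt ((1 + c - 2 * s) * (1 + c + 2 * s)) ≤ 2 * w - (1 - c) := by
    apply Real.sqrt_le_iff.2 ⟨this, ?_⟩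
    nlinarith [mul_nonneg (sub_nonneg.2 hc) (sub_nonneg.2 hw1)]
  linarith

lemma svd_exists {r p : ℕ} (hrp : r ≤ p) (R : Matrix (Fin r) (Fin p) ℝ) :
    ∃ (U : Matrix (Fin r) (Fin r) ℝ) (V : Matrix (Fin p) (Fin p) ℝ),
      U * Uᵀ = 1 ∧ Uᵀ * U = 1 ∧ V * Vᵀ = 1 ∧ Vᵀ * V = 1 ∧
      ∑ a, ((U * R * Vᵀ) a (Fin.castLE hrp a)) ^ 2 = frobSq R := by
  have hH : (R * Rᵀ).IsHermitian := by
    rw [Matrix.IsHermitian, conjTranspose_eq_transpose_of_trivial, transpose_mul, transpose_transpose]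
  set E : Matrix (Fin r) (Fin r) ℝ := (hH.eigenvectorUnitary : Matrix (Fin r) (Fin r) ℝ) with hE
  have hE1 : Eᵀ * E = 1 := by
    have := Unitary.coe_star_mul_self hH.eigenvectorUnitary
    rwa [star_eq_conjTranspose, conjTranspose_eq_transpose_of_trivial] at this
  have hE2 : E * Eᵀ = 1 := mul_eq_one_comm.1 hE1
  have hdiag : Eᵀ * (R * Rᵀ) * E = diagonal hH.eigenvalues := by
    have h := hH.spectral_theorem
    rw [Unitary.conjStarAlgAut_apply, star_eq_conjTranspose, conjTranspose_eq_transpose_of_trivial] at h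
    have h' : R * Rᵀ = E * diagonal hH.eigenvalues * Eᵀ := by
      simpa [Function.comp_def] using h
    calc Eᵀ * (R * Rᵀ) * E = Eᵀ * (E * diagonal hH.eigenvalues * Eᵀ) * E := by rw [← h']
      _ = (Eᵀ * E) * diagonal hH.eigenvalues * (Eᵀ * E) := by simp only [Matrix.mul_assoc]
      _ = _ := by rw [hE1]; simp
  -- rows of K = Eᵀ R are orthogonal
  set K : Matrix (Fin r) (Fin p) ℝ := Eᵀ * R with hK
  have hKK : K * Kᵀ = diagonal hH.eigenvalues := by
    rw [← hdiag, hK, transpose_mul, transpose_transpose]; simp only [Matrix.mul_assoc]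
  let w : Fin r → EuclideanSpace ℝ (Fin p) := fun a => WithLp.toLp 2 (K a)
  have hw : ∀ a b, a ≠ b → inner ℝ (w a) (w b) = 0 := by
    intro a b hab
    have := congrFun (congrFun hKK a) b
    rw [diagonal_apply_ne _ hab, Matrix.mul_apply] at this
    simp only [w, PiLp.inner_apply]
    rw [← this]
    exact Finset.sum_congr rfl fun x _ => by simp [mul_comm]
  let v : Fin p → EuclideanSpace ℝ (Fin p) := fun b =>
    if h : b.1 < r then ‖w ⟨b.1, h⟩‖⁻¹ • w ⟨b.1, h⟩ else 0
  let S : Set (Fin p) := {b | ∃ h : b.1 < r, w ⟨b.1, h⟩ ≠ 0}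
  have hv : Orthonormal ℝ (S.domRestrict v) := by
    constructor
    · rintro ⟨b, h, hb⟩
      simp only [Set.domRestrict_apply, v, dif_pos h]
      rw [norm_smul, norm_inv, norm_norm, inv_mul_cancel₀ (norm_ne_zero_iff.2 hb)]
    · rintro ⟨b, h, hb⟩ ⟨c, h', hc⟩ hbc
      simp only [Set.domRestrict_apply, v, dif_pos h, dif_pos h']
      rw [inner_smul_left, inner_smul_right, hw]
      · simp
      · intro he
        apply hbc
        simp only [Fin.mk.injEq] at he
        exact Subtype.ext (Fin.ext he)
  obtain ⟨b, hb⟩ := hv.exists_orthonormalBasis_extension_of_card_eq (by simp)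
  let V : Matrix (Fin p) (Fin p) ℝ := Matrix.of fun c x => b c x
  have hV : V * Vᵀ = 1 := by
    ext c d
    have := orthonormal_iff_ite.1 b.orthonormal c d
    rw [Matrix.mul_apply, Matrix.one_apply, ← this, PiLp.inner_apply]
    exact Finset.sum_congr rfl fun x _ => by simp [V, mul_comm]
  refine ⟨Eᵀ, V, by rw [transpose_transpose, hE1], by rw [transpose_transpose, hE2], hV,
    mul_eq_one_comm.1 hV, ?_⟩
  have hfrob : frobSq R = ∑ a, ‖w a‖ ^ 2 := by
    have h1 : frobSq R = (Rᵀ * R).trace := by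
      simp only [frobSq, Matrix.trace, Matrix.diag, Matrix.mul_apply, transpose_apply]
      rw [Finset.sum_comm]
      exact Finset.sum_congr rfl fun x _ => Finset.sum_congr rfl fun y _ => by ring
    have h2 : Kᵀ * K = Rᵀ * R := by
      rw [hK, transpose_mul, transpose_transpose]
      calc Rᵀ * E * (Eᵀ * R) = Rᵀ * (E * Eᵀ) * R := by simp only [Matrix.mul_assoc]
        _ = _ := by rw [hE2, Matrix.mul_one]
    rw [h1, ← h2, Matrix.trace_mul_comm]
    simp only [Matrix.trace, Matrix.diag, Matrix.mul_apply, transpose_apply]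
    refine Finset.sum_congr rfl fun a _ => ?_
    rw [EuclideanSpace.norm_sq_eq]
    exact Finset.sum_congr rfl fun y _ => by simp [w, sq]
  rw [hfrob]
  refine Finset.sum_congr rfl fun a _ => ?_
  have key : (K * Vᵀ) a (Fin.castLE hrp a) = inner ℝ (w a) (b (Fin.castLE hrp a)) := by
    rw [Matrix.mul_apply, PiLp.inner_apply]
    exact Finset.sum_congr rfl fun x _ => by simp [V, w, mul_comm]
  rw [key]
  by_cases h0 : w a = 0
  · simp [h0]
  · have hmem : Fin.castLE hrp a ∈ S := ⟨a.2, h0⟩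
    rw [hb _ hmem]
    have : v (Fin.castLE hrp a) = ‖w a‖⁻¹ • w a := by simp [v]
    rw [this, inner_smul_right, real_inner_self_eq_norm_sq]
    have : ‖w a‖ ≠ 0 := norm_ne_zero_iff.2 h0
    field_simp

lemma sum_dot {q k : Type*} [Fintype q] [Fintype k] (D : Matrix q q ℝ)
    (X Z : Matrix q k ℝ) :
    ∑ c, (fun i => X i c) ⬝ᵥ D *ᵥ (fun i => Z i c) = ∑ i, ∑ j, D i j * (X * Zᵀ) i j := by
  simp only [dotProduct, mulVec, Matrix.mul_apply, transpose_apply, Finset.mul_sum]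
  rw [Finset.sum_comm]
  refine Finset.sum_congr rfl fun i _ => ?_
  rw [Finset.sum_comm]
  refine Finset.sum_congr rfl fun j _ => Finset.sum_congr rfl fun c _ => ?_
  ring

lemma feas_apply {n r p : ℕ} {Y : Matrix (Fin n × Fin r) (Fin p) ℝ} (hY : Feasible Y)
    (i : Fin n) (a b : Fin r) : ∑ c, Y (i, a) c * Y (i, b) c = if a = b then 1 else 0 := by
  have := congrFun (congrFun (hY i) a) b
  rwa [Matrix.mul_apply, Matrix.one_apply] at this

lemma feas_sq {n r p : ℕ} {Y : Matrix (Fin n × Fin r) (Fin p) ℝ} (hY : Feasible Y)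
    (i : Fin n) : ∑ a, ∑ c, Y (i, a) c ^ 2 = (r : ℝ) := by
  have : ∀ a, ∑ c, Y (i, a) c ^ 2 = 1 := fun a => by
    have := feas_apply hY i a a
    simpa [sq] using this
  simp [this]

lemma contr {r p : ℕ} (A : Matrix (Fin r) (Fin p) ℝ) (hA : A * Aᵀ = 1) (v : Fin p → ℝ) :
    ∑ a, (A *ᵥ v) a ^ 2 ≤ ∑ c, v c ^ 2 := by
  have h1 : 0 ≤ (v - Aᵀ *ᵥ (A *ᵥ v)) ⬝ᵥ (v - Aᵀ *ᵥ (A *ᵥ v)) := by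
    simp only [dotProduct]
    exact Finset.sum_nonneg fun i _ => mul_self_nonneg _
  have h2 : v ⬝ᵥ (Aᵀ *ᵥ (A *ᵥ v)) = (A *ᵥ v) ⬝ᵥ (A *ᵥ v) := by
    rw [Matrix.dotProduct_mulVec, Matrix.vecMul_transpose]
  have h3 : (Aᵀ *ᵥ (A *ᵥ v)) ⬝ᵥ (Aᵀ *ᵥ (A *ᵥ v)) = (A *ᵥ v) ⬝ᵥ (A *ᵥ v) := by
    rw [Matrix.dotProduct_mulVec, Matrix.vecMul_transpose, Matrix.mulVec_mulVec, hA,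
      Matrix.one_mulVec]
  rw [sub_dotProduct, dotProduct_sub, dotProduct_sub, dotProduct_comm _ v, h2, h3] at h1
  have e1 : ∑ a, (A *ᵥ v) a ^ 2 = (A *ᵥ v) ⬝ᵥ (A *ᵥ v) := by simp [dotProduct, sq]
  have e2 : ∑ a, v a ^ 2 = v ⬝ᵥ v := by simp [dotProduct, sq]
  rw [e1, e2]; linarith [dotProduct_comm (Aᵀ *ᵥ (A *ᵥ v)) v, h2]

lemma quad_diff {q : Type*} [Fintype q] (D : Matrix q q ℝ) (hD : Dᵀ = D) (y z : q → ℝ) :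
    (y - z) ⬝ᵥ D *ᵥ (y + z) = y ⬝ᵥ D *ᵥ y - z ⬝ᵥ D *ᵥ z := by
  have : z ⬝ᵥ D *ᵥ y = y ⬝ᵥ D *ᵥ z := by
    rw [Matrix.dotProduct_mulVec, ← Matrix.mulVec_transpose, hD, dotProduct_comm]
  rw [mulVec_add, sub_dotProduct, dotProduct_add, dotProduct_add, this]; ring

lemma frob_nonneg {m m' : Type*} [Fintype m] [Fintype m'] (M : Matrix m m' ℝ) : 0 ≤ frobSq M :=
  Finset.sum_nonneg fun _ _ => Finset.sum_nonneg fun _ _ => sq_nonneg _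

lemma R_apply {n r p : ℕ} (hn : 1 ≤ n) (Y : Matrix (Fin n × Fin r) (Fin p) ℝ)
    (R : Matrix (Fin r) (Fin p) ℝ) (hR : R = ((n : ℝ)⁻¹) • ∑ i, blk Y i) (a : Fin r) (c : Fin p) :
    ∑ i, Y (i, a) c = n * R a c := by
  have hn' : (n : ℝ) ≠ 0 := by positivity
  rw [hR, Matrix.smul_apply, Matrix.sum_apply, smul_eq_mul, mul_inv_cancel_left₀ hn']
  rfl

lemma term1 {n r p : ℕ} (hn : 1 ≤ n) (hrp : r ≤ p)
    (D : Matrix (Fin n × Fin r) (Fin n × Fin r) ℝ) (hD : Dᵀ = D)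
    (Y : Matrix (Fin n × Fin r) (Fin p) ℝ) (hY : Feasible Y)
    (R : Matrix (Fin r) (Fin p) ℝ) (hR : R = ((n : ℝ)⁻¹) • ∑ i, blk Y i) :
    ∑ q, ∑ q', D q q' * ((Y * Yᵀ) q q' - if q.2 = q'.2 then 1 else 0) ≤
      2 * opNorm D * (Real.sqrt (r * n) * Real.sqrt (n * (r - frobSq R))) := by
  obtain ⟨U, V, hU1, hU2, hV1, hV2, hs⟩ := svd_exists hrp R
  have hn0 : (0 : ℝ) < n := by exact_mod_cast hn
  set κ := opNorm D with hκ
  have hκ0 : 0 ≤ κ := opNorm_nonneg' D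
  set y : Fin p → (Fin n × Fin r) → ℝ := fun b q => (Y * Vᵀ) q b with hy
  set Zm : Matrix (Fin n × Fin r) (Fin r) ℝ := Matrix.of fun q a => U a q.2 with hZm
  set z : Fin r → (Fin n × Fin r) → ℝ := fun a q => Zm q a with hz
  set s : Fin r → ℝ := fun a => (U * R * Vᵀ) a (Fin.castLE hrp a) with hsdef
  set c : Fin p → ℝ := fun b => (∑ q, y b q ^ 2) / n with hc
  have hnc : ∀ b, ∑ q, y b q ^ 2 = n * c b := fun b => by simp only [hc]; field_simp
  have hyy : ∑ b, y b ⬝ᵥ D *ᵥ y b = ∑ q, ∑ q', D q q' * (Y * Yᵀ) q q' := by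
    have := sum_dot D (Y * Vᵀ) (Y * Vᵀ)
    have h2 : (Y * Vᵀ) * (Y * Vᵀ)ᵀ = Y * Yᵀ := by
      rw [transpose_mul, transpose_transpose]
      calc Y * Vᵀ * (V * Yᵀ) = Y * (Vᵀ * V) * Yᵀ := by simp only [Matrix.mul_assoc]
        _ = _ := by rw [hV2, Matrix.mul_one]
    rw [h2] at this
    exact this
  have hzz : ∑ a, z a ⬝ᵥ D *ᵥ z a = ∑ q, ∑ q', D q q' * (if q.2 = q'.2 then 1 else 0) := by
    have := sum_dot D Zm Zm
    refine this.trans (Finset.sum_congr rfl fun q _ => Finset.sum_congr rfl fun q' _ => ?_)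
    congr 1
    have h2 := congrFun (congrFun hU2 q.2) q'.2
    rw [Matrix.mul_apply, Matrix.one_apply] at h2
    rw [Matrix.mul_apply, ← h2]
    rfl
  have hz2 : ∀ a, ∑ q, z a q ^ 2 = n := by
    intro a
    have h2 := congrFun (congrFun hU1 a) a
    rw [Matrix.mul_apply, Matrix.one_apply_eq] at h2
    rw [Fintype.sum_prod_type]
    simp only [hz, hZm, Matrix.of_apply]
    have h3 : ∑ x, U a x ^ 2 = 1 := by rw [← h2]; simp [sq]
    simp [h3]
  have hyz : ∀ a, ∑ q, y (Fin.castLE hrp a) q * z a q = n * s a := by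
    intro a
    rw [Fintype.sum_prod_type_right]
    simp only [hy, hz, hZm, hsdef, Matrix.of_apply, Matrix.mul_apply, transpose_apply]
    simp only [Finset.sum_mul, Finset.mul_sum]
    calc ∑ d, ∑ i, ∑ x, Y (i, d) x * V (Fin.castLE hrp a) x * U a d
        = ∑ d, ∑ x, ∑ i, Y (i, d) x * V (Fin.castLE hrp a) x * U a d :=
          Finset.sum_congr rfl fun d _ => Finset.sum_comm
      _ = ∑ d, ∑ x, (n * R d x) * V (Fin.castLE hrp a) x * U a d := by
          simp only [← Finset.sum_mul, R_apply hn Y R hR]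
      _ = ∑ x, ∑ d, (n * R d x) * V (Fin.castLE hrp a) x * U a d := Finset.sum_comm
      _ = _ := Finset.sum_congr rfl fun x _ => Finset.sum_congr rfl fun d _ => by ring
  have hc1 : ∀ b, c b ≤ 1 := by
    intro b
    have h2 := congrFun (congrFun hV1 b) b
    rw [Matrix.mul_apply, Matrix.one_apply_eq] at h2
    have h3 : ∑ x, V b x ^ 2 = 1 := by rw [← h2]; simp [sq]
    have h4 : ∑ q, y b q ^ 2 ≤ n := by
      rw [Fintype.sum_prod_type]
      calc _ ≤ ∑ i : Fin n, (1 : ℝ) := by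
            refine Finset.sum_le_sum fun i _ => ?_
            have := contr (blk Y i) (hY i) (V b)
            rw [h3] at this
            exact this
        _ = n := by simp
    simp only [hc]
    exact (div_le_one hn0).2 h4
  have hsum : ∑ b, n * c b = n * r := by
    simp only [← hnc]
    have h1 : ∀ q, ∑ b, y b q ^ 2 = ∑ x, Y q x ^ 2 := by
      intro q
      have h2 : (Y * Vᵀ) * (Y * Vᵀ)ᵀ = Y * Yᵀ := by
        rw [transpose_mul, transpose_transpose]
        calc Y * Vᵀ * (V * Yᵀ) = Y * (Vᵀ * V) * Yᵀ := by simp only [Matrix.mul_assoc]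
          _ = _ := by rw [hV2, Matrix.mul_one]
      have h3 := congrFun (congrFun h2 q) q
      rw [Matrix.mul_apply, Matrix.mul_apply (M := Y)] at h3
      simpa [sq, hy] using h3
    rw [Finset.sum_comm]
    simp only [h1]
    rw [Fintype.sum_prod_type]
    simp only [feas_sq hY]
    simp
  have hg : ∀ b, 0 ≤ κ * (n * c b) - y b ⬝ᵥ D *ᵥ y b := by
    intro b
    have := dot_le D (y b) (y b)
    rw [Real.mul_self_sqrt (Finset.sum_nonneg fun _ _ => sq_nonneg _), hnc] at this
    linarith
  have hsub : ∑ a, (κ * (n * c (Fin.castLE hrp a)) -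
      y (Fin.castLE hrp a) ⬝ᵥ D *ᵥ y (Fin.castLE hrp a)) ≤
      ∑ b, (κ * (n * c b) - y b ⬝ᵥ D *ᵥ y b) := by
    have := Finset.sum_map Finset.univ (Fin.castLEEmb hrp)
      (fun b => κ * (n * c b) - y b ⬝ᵥ D *ᵥ y b)
    simp only [Fin.castLEEmb_apply] at this
    rw [← this]
    exact Finset.sum_le_univ_sum_of_nonneg hg
  have hsc : ∀ a, s a ^ 2 ≤ c (Fin.castLE hrp a) := by
    intro a
    have := Finset.sum_mul_sq_le_sq_mul_sq Finset.univ (y (Fin.castLE hrp a)) (z a)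
    rw [hyz, hz2, hnc] at this
    have h5 : (n : ℝ) ^ 2 * s a ^ 2 ≤ (n : ℝ) ^ 2 * c (Fin.castLE hrp a) := by nlinarith
    exact le_of_mul_le_mul_left h5 (by positivity)
  have hpt : ∀ a, y (Fin.castLE hrp a) ⬝ᵥ D *ᵥ y (Fin.castLE hrp a) - z a ⬝ᵥ D *ᵥ z a
      + κ * (n * (1 - c (Fin.castLE hrp a))) ≤ 2 * κ * n * Real.sqrt (1 - s a ^ 2) := by
    intro a
    have h1 := dot_le D (y (Fin.castLE hrp a) - z a) (y (Fin.castLE hrp a) + z a)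
    rw [quad_diff D hD] at h1
    have e1 : ∑ q, (y (Fin.castLE hrp a) - z a) q ^ 2 =
        n * (1 + c (Fin.castLE hrp a) - 2 * s a) := by
      have : ∀ q, (y (Fin.castLE hrp a) - z a) q ^ 2 =
        y (Fin.castLE hrp a) q ^ 2 + z a q ^ 2 - 2 * (y (Fin.castLE hrp a) q * z a q) :=
        fun q => by rw [Pi.sub_apply]; ring
      simp only [this, Finset.sum_sub_distrib, Finset.sum_add_distrib, ← Finset.mul_sum, hyz, hz2, hnc]
      ring
    have e2 : ∑ q, (y (Fin.castLE hrp a) + z a) q ^ 2 =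
        n * (1 + c (Fin.castLE hrp a) + 2 * s a) := by
      have : ∀ q, (y (Fin.castLE hrp a) + z a) q ^ 2 =
        y (Fin.castLE hrp a) q ^ 2 + z a q ^ 2 + 2 * (y (Fin.castLE hrp a) q * z a q) :=
        fun q => by rw [Pi.add_apply]; ring
      simp only [this, Finset.sum_add_distrib, ← Finset.mul_sum, hyz, hz2, hnc]
      ring
    rw [e1, e2, Real.sqrt_mul hn0.le, Real.sqrt_mul hn0.le] at h1
    have h2 := scalar_ineq _ _ (hc1 (Fin.castLE hrp a)) (hsc a)
    have h3 := mul_le_mul_of_nonneg_left h2 (mul_nonneg hκ0 hn0.le)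
    have h4 := Real.mul_self_sqrt hn0.le
    have h5 : opNorm D * (√↑n * √(1 + c (Fin.castLE hrp a) - 2 * s a) *
      (√↑n * √(1 + c (Fin.castLE hrp a) + 2 * s a))) = κ * n *
      (√(1 + c (Fin.castLE hrp a) - 2 * s a) * √(1 + c (Fin.castLE hrp a) + 2 * s a)) := by
      nth_rewrite 3 [← h4]; rw [hκ]; ring
    rw [h5] at h1
    linarith
  have hcs : ∑ a, Real.sqrt (1 - s a ^ 2) ≤ Real.sqrt r * Real.sqrt (r - frobSq R) := by
    have := Real.sum_sqrt_mul_sqrt_le (Finset.univ : Finset (Fin r)) (f := fun _ => (1:ℝ))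
      (g := fun a => 1 - s a ^ 2) (fun _ => zero_le_one)
      (fun a => by have := (hsc a).trans (hc1 _); linarith)
    simpa [Finset.sum_sub_distrib, hs, hsdef] using this
  have hfin : Real.sqrt (r * n) * Real.sqrt (n * (r - frobSq R)) =
      n * (Real.sqrt r * Real.sqrt (r - frobSq R)) := by
    rw [Real.sqrt_mul (Nat.cast_nonneg r), Real.sqrt_mul hn0.le]
    nth_rewrite 3 [← Real.mul_self_sqrt hn0.le]; ring
  have hpts := Finset.sum_le_sum fun a (_ : a ∈ (Finset.univ : Finset (Fin r))) => hpt a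
  rw [hfin]
  simp only [mul_sub, Finset.sum_sub_distrib, Finset.sum_add_distrib, ← Finset.mul_sum] at hpts hsub ⊢
  rw [← Finset.mul_sum] at hsum
  rw [hyy] at hsub
  rw [hzz] at hpts
  rw [hsum] at hsub
  have h9 := mul_le_mul_of_nonneg_left hcs (mul_nonneg hκ0 hn0.le)
  simp only [Finset.sum_const, Finset.card_univ, Fintype.card_fin, nsmul_eq_mul] at hpts
  linarith

lemma exists_dir {n r p : ℕ} (hn : 1 ≤ n) (Y : Matrix (Fin n × Fin r) (Fin p) ℝ) (hY : Feasible Y)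
    (R : Matrix (Fin r) (Fin p) ℝ) :
    ∃ o : Matrix (Fin r) (Fin p) ℝ, (∑ a, ∑ c, o a c ^ 2 = (r : ℝ)) ∧
      (∑ a, ∑ c, o a c * R a c) ^ 2 = r * frobSq R := by
  rcases eq_or_ne (frobSq R) 0 with h | h
  · refine ⟨blk Y ⟨0, hn⟩, feas_sq hY _, ?_⟩
    have hR : ∀ a c, R a c = 0 := by
      intro a c
      unfold frobSq at h
      have h1 := (Finset.sum_eq_zero_iff_of_nonneg
        (fun _ _ => Finset.sum_nonneg fun _ _ => sq_nonneg _)).1 h a (Finset.mem_univ _)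
      have h2 := (Finset.sum_eq_zero_iff_of_nonneg (fun _ _ => sq_nonneg _)).1 h1 c
        (Finset.mem_univ _)
      exact (pow_eq_zero_iff (two_ne_zero)).1 h2
    simp [hR, h]
  · have hpos : 0 < frobSq R := lt_of_le_of_ne (frob_nonneg R) (Ne.symm h)
    have h2 : Real.sqrt (r / frobSq R) ^ 2 = r / frobSq R := Real.sq_sqrt (by positivity)
    have h3 : ∑ a, ∑ c, R a c ^ 2 = frobSq R := rfl
    refine ⟨Real.sqrt (r / frobSq R) • R, ?_, ?_⟩
    · simp only [Matrix.smul_apply, smul_eq_mul, mul_pow, ← Finset.mul_sum, h2, h3]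
      field_simp
    · simp only [Matrix.smul_apply, smul_eq_mul, mul_assoc, ← Finset.mul_sum, ← sq, h3]
      rw [mul_pow, h2]
      field_simp

lemma term2 {n r p : ℕ} (hn : 1 ≤ n)
    (D : Matrix (Fin n × Fin r) (Fin n × Fin r) ℝ) (hD : Dᵀ = D)
    (Y : Matrix (Fin n × Fin r) (Fin p) ℝ) (hY : Feasible Y)
    (R : Matrix (Fin r) (Fin p) ℝ) (hR : R = ((n : ℝ)⁻¹) • ∑ i, blk Y i) :
    ∑ q, ∑ q', D q q' * ((r - ∑ a, ∑ c, Y (q.1, a) c * Y (q'.1, a) c) * (Y * Yᵀ) q q') ≤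
      2 * r * opNorm D * (Real.sqrt (r * n) * Real.sqrt (n * (r - frobSq R))) := by
  obtain ⟨o, ho1, ho2⟩ := exists_dir hn Y hY R
  have hn0 : (0 : ℝ) < n := by exact_mod_cast hn
  set m := ∑ a, ∑ c, o a c * R a c with hm
  let X : Matrix (Fin n × Fin r) (Fin p × Fin r × Fin p) ℝ :=
    Matrix.of fun q k => Y q k.1 * (o k.2.1 k.2.2 - Y (q.1, k.2.1) k.2.2)
  let Z : Matrix (Fin n × Fin r) (Fin p × Fin r × Fin p) ℝ :=
    Matrix.of fun q k => Y q k.1 * (o k.2.1 k.2.2 + Y (q.1, k.2.1) k.2.2)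
  have hfam := fam_le D (fun k q => X q k) (fun k q => Z q k)
  rw [sum_dot] at hfam
  have horth : ∑ i, ∑ a, ∑ c, o a c * Y (i, a) c = n * m := by
    rw [Finset.sum_comm]
    rw [hm, Finset.mul_sum]
    refine Finset.sum_congr rfl fun a _ => ?_
    rw [Finset.sum_comm, Finset.mul_sum]
    refine Finset.sum_congr rfl fun c _ => ?_
    rw [← Finset.mul_sum, R_apply hn Y R hR]; ring
  have hnorm : ∀ ε : ℝ, ε ^ 2 = 1 → ∑ k : Fin p × Fin r × Fin p, ∑ q : Fin n × Fin r,
      (Y q k.1 * (o k.2.1 k.2.2 + ε * Y (q.1, k.2.1) k.2.2)) ^ 2 = r * n * (2 * r + ε * (2 * m)) := by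
    intro ε hε
    rw [Finset.sum_comm, Fintype.sum_prod_type]
    have h1 : ∀ i, ∑ a, ∑ c, (o a c + ε * Y (i, a) c) ^ 2 =
        2 * r + ε * (2 * ∑ a, ∑ c, o a c * Y (i, a) c) := by
      intro i
      have : ∀ a c, (o a c + ε * Y (i, a) c) ^ 2 =
        o a c ^ 2 + Y (i, a) c ^ 2 + ε * (2 * (o a c * Y (i, a) c)) := fun a c => by
          linear_combination (Y (i, a) c ^ 2) * hε
      simp only [this, Finset.sum_add_distrib, ← Finset.mul_sum, ho1, feas_sq hY]
      ring
    have h2 : ∀ i, ∑ d, ∑ k : Fin p × Fin r × Fin p,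
      (Y (i, d) k.1 * (o k.2.1 k.2.2 + ε * Y (i, k.2.1) k.2.2)) ^ 2 =
        r * (2 * r + ε * (2 * ∑ a, ∑ c, o a c * Y (i, a) c)) := by
      intro i
      rw [← h1, ← feas_sq hY i, Finset.sum_mul]
      refine Finset.sum_congr rfl fun d _ => ?_
      rw [Fintype.sum_prod_type, Finset.sum_mul]
      refine Finset.sum_congr rfl fun b _ => ?_
      rw [Fintype.sum_prod_type]
      simp only [mul_pow, ← Finset.mul_sum]
    simp only [h2, ← Finset.mul_sum, Finset.sum_add_distrib, horth]
    simp
    ring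
  have hX := hnorm (-1) (by norm_num)
  have hZ := hnorm 1 (by norm_num)
  have hX' : ∑ k, ∑ q, X q k ^ 2 = r * n * (2 * r - 2 * m) := by
    rw [show (r : ℝ) * n * (2 * r - 2 * m) = r * n * (2 * r + -1 * (2 * m)) by ring, ← hX]
    refine Finset.sum_congr rfl fun k _ => Finset.sum_congr rfl fun q _ => ?_
    simp only [X, Matrix.of_apply]; ring
  have hZ' : ∑ k, ∑ q, Z q k ^ 2 = r * n * (2 * r + 2 * m) := by
    rw [show (r : ℝ) * n * (2 * r + 2 * m) = r * n * (2 * r + 1 * (2 * m)) by ring, ← hZ]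
    refine Finset.sum_congr rfl fun k _ => Finset.sum_congr rfl fun q _ => ?_
    simp only [Z, Matrix.of_apply]; ring
  have hXZ : ∀ q q', (X * Zᵀ) q q' = (Y * Yᵀ) q q' *
      (r - (∑ a, ∑ c, Y (q.1, a) c * Y (q'.1, a) c) + (∑ a, ∑ c, o a c * Y (q'.1, a) c)
        - (∑ a, ∑ c, o a c * Y (q.1, a) c)) := by
    intro q q'
    have h1 : (r - (∑ a, ∑ c, Y (q.1, a) c * Y (q'.1, a) c) + (∑ a, ∑ c, o a c * Y (q'.1, a) c)
        - (∑ a, ∑ c, o a c * Y (q.1, a) c)) =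
        ∑ a, ∑ c, (o a c - Y (q.1, a) c) * (o a c + Y (q'.1, a) c) := by
      rw [← ho1]
      simp only [← Finset.sum_sub_distrib, ← Finset.sum_add_distrib]
      exact Finset.sum_congr rfl fun a _ => Finset.sum_congr rfl fun c _ => by ring
    rw [h1, Matrix.mul_apply, Matrix.mul_apply, Fintype.sum_prod_type, Finset.sum_mul]
    refine Finset.sum_congr rfl fun b _ => ?_
    rw [Fintype.sum_prod_type, Finset.mul_sum]
    refine Finset.sum_congr rfl fun a _ => ?_
    rw [Finset.mul_sum]
    refine Finset.sum_congr rfl fun c _ => ?_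
    simp only [X, Z, Matrix.of_apply, transpose_apply]; ring
  set P : Fin n → ℝ := fun i => ∑ a, ∑ c, o a c * Y (i, a) c with hP
  have hanti : ∑ q, ∑ q', D q q' * ((Y * Yᵀ) q q' * P q'.1) =
      ∑ q, ∑ q', D q q' * ((Y * Yᵀ) q q' * P q.1) := by
    rw [Finset.sum_comm]
    refine Finset.sum_congr rfl fun q _ => Finset.sum_congr rfl fun q' _ => ?_
    have h1 : D q' q = D q q' := congrFun (congrFun hD q) q'
    have h2 : (Y * Yᵀ) q' q = (Y * Yᵀ) q q' := by
      simp only [Matrix.mul_apply, transpose_apply, mul_comm]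
    rw [h1, h2]
  have hlhs : ∑ q, ∑ q', D q q' * (X * Zᵀ) q q' = ∑ q, ∑ q', D q q' *
      ((r - ∑ a, ∑ c, Y (q.1, a) c * Y (q'.1, a) c) * (Y * Yᵀ) q q') := by
    have : ∀ q q', D q q' * (X * Zᵀ) q q' = D q q' *
      ((r - ∑ a, ∑ c, Y (q.1, a) c * Y (q'.1, a) c) * (Y * Yᵀ) q q') +
      D q q' * ((Y * Yᵀ) q q' * P q'.1) - D q q' * ((Y * Yᵀ) q q' * P q.1) := by
      intro q q'; rw [hXZ]; simp only [hP]; ring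
    simp only [this, Finset.sum_sub_distrib, Finset.sum_add_distrib, hanti]
    ring
  rw [hlhs, hX', hZ'] at hfam
  refine hfam.trans (le_of_eq ?_)
  have hXnn : 0 ≤ (r : ℝ) * n * (2 * r - 2 * m) := by
    rw [← hX']; exact Finset.sum_nonneg fun _ _ => Finset.sum_nonneg fun _ _ => sq_nonneg _
  rw [← Real.sqrt_mul hXnn, ← Real.sqrt_mul (by positivity)]
  have : (r : ℝ) * n * (2 * r - 2 * m) * (r * n * (2 * r + 2 * m)) =
      (2 * r) ^ 2 * (r * n * (n * (r - frobSq R))) := by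
    linear_combination (-4 * (r : ℝ) ^ 2 * n ^ 2) * ho2
  rw [this, Real.sqrt_mul (by positivity), Real.sqrt_sq (by positivity)]
  ring

/-- The entry sums `⟨Y_i, Y_j⟩`. -/
def tt {n r p : ℕ} (Y : Matrix (Fin n × Fin r) (Fin p) ℝ) (i j : Fin n) : ℝ :=
  ∑ a, ∑ c, Y (i, a) c * Y (j, a) c

/-- Test directions. -/
def dirY {n r p : ℕ} (Y : Matrix (Fin n × Fin r) (Fin p) ℝ) (α : Fin r) (β : Fin p) :
    Matrix (Fin n × Fin r) (Fin p) ℝ :=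
  Matrix.of fun q c => (if q.2 = α then if c = β then 1 else 0 else 0) - Y q β * Y (q.1, α) c

/-- Summed second moment of the test directions. -/
def Tm {n r p : ℕ} (Y : Matrix (Fin n × Fin r) (Fin p) ℝ) (q q' : Fin n × Fin r) : ℝ :=
  ((p : ℝ) - 2) * (if q.2 = q'.2 then 1 else 0) + tt Y q.1 q'.1 * (Y * Yᵀ) q q'

lemma dirY_tangent {n r p : ℕ} {Y : Matrix (Fin n × Fin r) (Fin p) ℝ} (hY : Feasible Y)
    (α : Fin r) (β : Fin p) (i : Fin n) :
    blk (dirY Y α β) i * (blk Y i)ᵀ + blk Y i * (blk (dirY Y α β) i)ᵀ = 0 := by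
  have h : ∀ a b, ∑ c, dirY Y α β (i, a) c * Y (i, b) c =
      (if a = α then Y (i, b) β else 0) - Y (i, a) β * (if α = b then 1 else 0) := by
    intro a b
    simp only [dirY, Matrix.of_apply, sub_mul, Finset.sum_sub_distrib]
    congr 1
    · split_ifs <;> simp
    · rw [← feas_apply hY i α b, Finset.mul_sum]
      exact Finset.sum_congr rfl fun c _ => by ring
  ext a b
  have e1 : (blk (dirY Y α β) i * (blk Y i)ᵀ) a b = ∑ c, dirY Y α β (i, a) c * Y (i, b) c := by
    rw [Matrix.mul_apply]; rfl
  have e2 : (blk Y i * (blk (dirY Y α β) i)ᵀ) a b = ∑ c, dirY Y α β (i, b) c * Y (i, a) c := by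
    rw [Matrix.mul_apply]
    exact Finset.sum_congr rfl fun c _ => mul_comm _ _
  rw [Matrix.add_apply, e1, e2, h, h, Matrix.zero_apply]
  by_cases h1 : a = α <;> by_cases h2 : b = α <;> simp [h1, h2, eq_comm] <;> simp_all [eq_comm]

lemma dirY_sum {n r p : ℕ} {Y : Matrix (Fin n × Fin r) (Fin p) ℝ} (hY : Feasible Y)
    (q q' : Fin n × Fin r) :
    ∑ α : Fin r, ∑ β : Fin p, (dirY Y α β * (dirY Y α β)ᵀ) q q' = Tm Y q q' := by
  obtain ⟨i, a⟩ := q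
  obtain ⟨j, b⟩ := q'
  have hexp : ∀ (α : Fin r) (β c : Fin p), dirY Y α β (i, a) c * dirY Y α β (j, b) c =
      (if a = α then if b = α then if c = β then (1:ℝ) else 0 else 0 else 0)
      - (if a = α then if c = β then Y (j, b) β * Y (j, α) c else 0 else 0)
      - (if b = α then if c = β then Y (i, a) β * Y (i, α) c else 0 else 0)
      + (Y (i, a) β * Y (j, b) β) * (Y (i, α) c * Y (j, α) c) := by
    intro α β c
    simp only [dirY, Matrix.of_apply]
    split_ifs <;> ring
  have hYY : (Y * Yᵀ) (i, a) (j, b) = ∑ β, Y (i, a) β * Y (j, b) β := by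
    rw [Matrix.mul_apply]; rfl
  simp only [Matrix.mul_apply (M := dirY Y _ _), transpose_apply, hexp, Finset.sum_add_distrib,
    Finset.sum_sub_distrib]
  have s1 : ∑ α : Fin r, ∑ β : Fin p, ∑ c : Fin p, (if a = α then if b = α then if c = β then (1:ℝ) else 0 else 0 else 0)
      = p * (if a = b then 1 else 0) := by
    rw [Finset.sum_eq_single a (by intro x _ hx; simp [hx.symm]) (by simp)]
    by_cases h : b = a
    · simp [h]
    · simp [h, Ne.symm h]
  have s2 : ∑ α : Fin r, ∑ β : Fin p, ∑ c : Fin p, (if a = α then if c = β then Y (j, b) β * Y (j, α) c else 0 else 0)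
      = (if a = b then 1 else 0) := by
    rw [Finset.sum_eq_single a (by intro x _ hx; simp [hx.symm]) (by simp)]
    have := feas_apply hY j a b
    simp only [if_true, Finset.sum_ite_eq', Finset.sum_ite_eq, Finset.mem_univ]
    rw [← this]
    exact Finset.sum_congr rfl fun c _ => mul_comm _ _
  have s3 : ∑ α : Fin r, ∑ β : Fin p, ∑ c : Fin p, (if b = α then if c = β then Y (i, a) β * Y (i, α) c else 0 else 0)
      = (if a = b then 1 else 0) := by
    rw [Finset.sum_eq_single b (by intro x _ hx; simp [hx.symm]) (by simp)]
    have := feas_apply hY i a b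
    simp only [if_true, Finset.sum_ite_eq', Finset.sum_ite_eq, Finset.mem_univ]
    rw [← this]
  have s4 : ∑ α : Fin r, ∑ β : Fin p, ∑ c, (Y (i, a) β * Y (j, b) β) * (Y (i, α) c * Y (j, α) c)
      = tt Y i j * (Y * Yᵀ) (i, a) (j, b) := by
    rw [hYY]
    unfold tt
    rw [Finset.sum_mul]
    refine Finset.sum_congr rfl fun α _ => ?_
    rw [Finset.mul_sum]
    refine Finset.sum_congr rfl fun β _ => ?_
    rw [← Finset.mul_sum, mul_comm]
  rw [s1, s2, s3, s4]
  simp only [Tm]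
  ring

lemma tt_self {n r p : ℕ} {Y : Matrix (Fin n × Fin r) (Fin p) ℝ} (hY : Feasible Y) (i : Fin n) :
    tt Y i i = r := by
  rw [← feas_sq hY i]
  simp [tt, sq]

lemma crit_ineq {n r p : ℕ} (Lhat : Matrix (Fin n × Fin r) (Fin n × Fin r) ℝ)
    (Y : Matrix (Fin n × Fin r) (Fin p) ℝ) (hY : IsSecondOrderCritical Lhat Y) :
    0 ≤ ∑ q, ∑ q', Lhat q q' * (Tm Y q q' - ((p : ℝ) + r - 2) * (Y * Yᵀ) q q') := by
  obtain ⟨hF, -, h2⟩ := hY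
  have hsymm : ∀ q q', (Y * Yᵀ) q' q = (Y * Yᵀ) q q' := by
    intro q q'
    simp only [Matrix.mul_apply, transpose_apply, mul_comm]
  have h0 : 0 ≤ ∑ q, ∑ q', Smat Lhat Y q q' * Tm Y q q' := by
    have h3 : 0 ≤ ∑ α : Fin r, ∑ β : Fin p, (Smat Lhat Y * dirY Y α β * (dirY Y α β)ᵀ).trace :=
      Finset.sum_nonneg fun α _ => Finset.sum_nonneg fun β _ =>
        h2 _ (dirY_tangent hF α β)
    refine h3.trans (le_of_eq ?_)
    have h4 : ∀ α β, (Smat Lhat Y * dirY Y α β * (dirY Y α β)ᵀ).trace =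
        ∑ q, ∑ q', Smat Lhat Y q q' * (dirY Y α β * (dirY Y α β)ᵀ) q q' := by
      intro α β
      rw [Matrix.mul_assoc, Matrix.trace]
      refine Finset.sum_congr rfl fun q _ => ?_
      rw [Matrix.diag_apply, Matrix.mul_apply]
      refine Finset.sum_congr rfl fun q' _ => ?_
      congr 1
      simp only [Matrix.mul_apply, transpose_apply, mul_comm]
    simp only [h4, ← dirY_sum hF, Finset.mul_sum]
    calc ∑ α : Fin r, ∑ β : Fin p, ∑ q, ∑ q', Smat Lhat Y q q' * (dirY Y α β * (dirY Y α β)ᵀ) q q'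
        = ∑ α, ∑ q, ∑ β, ∑ q', Smat Lhat Y q q' * (dirY Y α β * (dirY Y α β)ᵀ) q q' :=
          Finset.sum_congr rfl fun _ _ => Finset.sum_comm
      _ = ∑ q, ∑ α : Fin r, ∑ β : Fin p, ∑ q', Smat Lhat Y q q' * (dirY Y α β * (dirY Y α β)ᵀ) q q' :=
          Finset.sum_comm
      _ = ∑ q, ∑ α, ∑ q', ∑ β, Smat Lhat Y q q' * (dirY Y α β * (dirY Y α β)ᵀ) q q' :=
          Finset.sum_congr rfl fun _ _ => Finset.sum_congr rfl fun _ _ => Finset.sum_comm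
      _ = _ := Finset.sum_congr rfl fun _ _ => Finset.sum_comm
  have h5 : ∑ q, ∑ q', SBD (Lhat * Y * Yᵀ) q q' * Tm Y q q' =
      ∑ q, ∑ q', Lhat q q' * (((p : ℝ) + r - 2) * (Y * Yᵀ) q q') := by
    refine Finset.sum_congr rfl fun q _ => ?_
    have h6 : ∀ q', SBD (Lhat * Y * Yᵀ) q q' * Tm Y q q' =
        if q = q' then ((p : ℝ) + r - 2) * (Lhat * Y * Yᵀ) q q else 0 := by
      rintro ⟨j, b⟩
      obtain ⟨i, a⟩ := q
      by_cases hij : i = j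
      · subst hij
        have h7 : (Y * Yᵀ) (i, a) (i, b) = if a = b then 1 else 0 := by
          rw [← feas_apply hF i a b, Matrix.mul_apply]; rfl
        by_cases hab : a = b
        · subst hab
          simp only [SBD, Tm, h7, tt_self hF, Matrix.of_apply, if_true]
          ring
        · simp [SBD, Tm, h7, hab]
      · simp [SBD, hij]
    simp only [h6, Finset.sum_ite_eq, Finset.mem_univ, if_true]
    rw [Matrix.mul_assoc, Matrix.mul_apply, Finset.mul_sum]
    refine Finset.sum_congr rfl fun q' _ => ?_
    rw [hsymm q q']; ring
  simp only [Smat, Matrix.sub_apply, sub_mul, Finset.sum_sub_distrib] at h0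
  rw [h5] at h0
  simpa only [mul_sub, Finset.sum_sub_distrib] using h0

lemma trace_blk {n r p : ℕ} (Y : Matrix (Fin n × Fin r) (Fin p) ℝ) (i j : Fin n) :
    (blk Y i * (blk Y j)ᵀ).trace = tt Y i j := by
  rw [Matrix.trace]
  refine Finset.sum_congr rfl fun a _ => ?_
  rw [Matrix.diag_apply, Matrix.mul_apply]; rfl

lemma lap_sum {n : ℕ} (G : SimpleGraph (Fin n)) [DecidableRel G.Adj] (f : Fin n → Fin n → ℝ) :
    ∑ i, ∑ j, G.lapMatrix ℝ i j * f i j = ∑ i, ∑ j, G.adjMatrix ℝ i j * (f i i - f i j) := by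
  refine Finset.sum_congr rfl fun i _ => ?_
  have hd : ∑ j, G.adjMatrix ℝ i j = G.degree i := by
    have := SimpleGraph.adjMatrix_mulVec_const_apply (α := ℝ) (G := G) (a := 1) (v := i)
    simpa [Matrix.mulVec, dotProduct] using this
  simp only [SimpleGraph.lapMatrix, SimpleGraph.degMatrix, Matrix.sub_apply, sub_mul, mul_sub,
    Finset.sum_sub_distrib, Matrix.diagonal_apply, ite_mul, zero_mul, Finset.sum_ite_eq,
    Finset.mem_univ, if_true, ← Finset.sum_mul, hd]

lemma frob_diff {n r p : ℕ} {Y : Matrix (Fin n × Fin r) (Fin p) ℝ} (hY : Feasible Y)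
    (i j : Fin n) : frobSq (blk Y i - blk Y j) = 2 * (r - tt Y i j) := by
  have : ∀ a c, (blk Y i - blk Y j) a c ^ 2 =
      Y (i, a) c ^ 2 + Y (j, a) c ^ 2 - 2 * (Y (i, a) c * Y (j, a) c) := by
    intro a c
    simp only [Matrix.sub_apply, blk, Matrix.of_apply]; ring
  simp only [frobSq, this, Finset.sum_sub_distrib, Finset.sum_add_distrib, feas_sq hY,
    ← Finset.mul_sum, tt]
  ring

lemma frob_W {n r p : ℕ} (hn : 1 ≤ n) {Y : Matrix (Fin n × Fin r) (Fin p) ℝ} (hY : Feasible Y)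
    (R : Matrix (Fin r) (Fin p) ℝ) (hR : R = ((n : ℝ)⁻¹) • ∑ i, blk Y i)
    (W : Matrix (Fin n × Fin r) (Fin p) ℝ) (hW : ∀ i, blk W i = blk Y i - R) :
    frobSq W = n * (r - frobSq R) := by
  have h1 : ∀ i a c, W (i, a) c = Y (i, a) c - R a c := fun i a c =>
    congrFun (congrFun (hW i) a) c
  have h2 : ∀ i a c, W (i, a) c ^ 2 = Y (i, a) c ^ 2 - 2 * (R a c * Y (i, a) c) + R a c ^ 2 := by
    intro i a c; rw [h1]; ring
  have h3 : ∑ i, ∑ a, ∑ c, R a c * Y (i, a) c = n * frobSq R := by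
    rw [Finset.sum_comm]
    rw [frobSq, Finset.mul_sum]
    refine Finset.sum_congr rfl fun a _ => ?_
    rw [Finset.sum_comm, Finset.mul_sum]
    refine Finset.sum_congr rfl fun c _ => ?_
    rw [← Finset.mul_sum, R_apply hn Y R hR]; ring
  have h4 : ∑ a, ∑ c, R a c ^ 2 = frobSq R := rfl
  rw [frobSq, Fintype.sum_prod_type]
  simp only [h2, Finset.sum_add_distrib, Finset.sum_sub_distrib, feas_sq hY, ← Finset.mul_sum, h3, h4]
  simp
  ring

/-- **Key second-order inequality, noisy case.**  Suppose all `Z_i = I_r`, so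
`L̂ = L ⊗ I_r − Δ`.  If `Y` is a second-order critical point, `R = (1/n) Σ_i Y_i`,
`W_i = Y_i − R`, and `W` is the stack of the `W_i`, then
`(p − r − 2) Σ_{ij} L_ij tr(Y_i Y_jᵀ) + (1/4) Σ_{ij} A_ij ‖W_i − W_j‖_F⁴
  ≤ 2(p + r − 2) ‖Δ‖ √(rn) ‖W‖_F`. -/
theorem noisy_second_order_inequality
    (n r p : ℕ) (hn : 1 ≤ n) (hr : 1 ≤ r) (hrp : r ≤ p)
    (G : SimpleGraph (Fin n)) [DecidableRel G.Adj]
    (Δ : Matrix (Fin n × Fin r) (Fin n × Fin r) ℝ) (hΔsym : Δᵀ = Δ)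
    (hΔsupp : ∀ q q' : Fin n × Fin r, ¬ G.Adj q.1 q'.1 → Δ q q' = 0)
    (Lhat : Matrix (Fin n × Fin r) (Fin n × Fin r) ℝ)
    (hLhat : Lhat = (G.lapMatrix ℝ) ⊗ₖ (1 : Matrix (Fin r) (Fin r) ℝ) - Δ)
    (Y : Matrix (Fin n × Fin r) (Fin p) ℝ)
    (hY : IsSecondOrderCritical Lhat Y)
    (R : Matrix (Fin r) (Fin p) ℝ) (hR : R = ((n : ℝ)⁻¹) • ∑ i, blk Y i)
    (W : Matrix (Fin n × Fin r) (Fin p) ℝ) (hW : ∀ i, blk W i = blk Y i - R) :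
    ((p : ℝ) - r - 2) *
        (∑ i, ∑ j, G.lapMatrix ℝ i j * (blk Y i * (blk Y j)ᵀ).trace)
      + (1 / 4) *
        (∑ i, ∑ j, G.adjMatrix ℝ i j * (frobSq (blk W i - blk W j)) ^ 2)
      ≤ 2 * ((p : ℝ) + r - 2) * opNorm Δ * Real.sqrt (r * n) * Real.sqrt (frobSq W) := by
  have hF := hY.1
  have hcrit := crit_ineq Lhat Y hY
  have hWW : ∀ i j, frobSq (blk W i - blk W j) = 2 * (r - tt Y i j) := by
    intro i j
    rw [hW, hW, sub_sub_sub_cancel_right, frob_diff hF]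
  have hLpart : ∑ q, ∑ q', ((G.lapMatrix ℝ) ⊗ₖ (1 : Matrix (Fin r) (Fin r) ℝ)) q q' *
      (Tm Y q q' - ((p : ℝ) + r - 2) * (Y * Yᵀ) q q') =
      ∑ i, ∑ j, G.lapMatrix ℝ i j *
        (((p : ℝ) - 2) * r + tt Y i j ^ 2 - ((p : ℝ) + r - 2) * tt Y i j) := by
    rw [Fintype.sum_prod_type]
    refine Finset.sum_congr rfl fun i _ => ?_
    simp only [Fintype.sum_prod_type]
    rw [Finset.sum_comm]
    refine Finset.sum_congr rfl fun j _ => ?_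
    have h1 : ∀ a : Fin r, ∑ b, ((G.lapMatrix ℝ) ⊗ₖ (1 : Matrix (Fin r) (Fin r) ℝ)) (i, a) (j, b) *
        (Tm Y (i, a) (j, b) - ((p : ℝ) + r - 2) * (Y * Yᵀ) (i, a) (j, b)) =
        G.lapMatrix ℝ i j * (((p : ℝ) - 2) + tt Y i j * (Y * Yᵀ) (i, a) (j, a)
          - ((p : ℝ) + r - 2) * (Y * Yᵀ) (i, a) (j, a)) := by
      intro a
      rw [Finset.sum_eq_single a]
      · simp [Matrix.kroneckerMap_apply, Tm]
      · intro b _ hb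
        simp [Matrix.kroneckerMap_apply, Matrix.one_apply, hb.symm]
      · simp
    have h2 : ∑ a, (Y * Yᵀ) (i, a) (j, a) = tt Y i j := by
      refine Finset.sum_congr rfl fun a _ => ?_
      rw [Matrix.mul_apply]; rfl
    simp only [h1, ← Finset.mul_sum, Finset.sum_add_distrib, Finset.sum_sub_distrib, h2]
    simp only [Finset.sum_const, Finset.card_univ, Fintype.card_fin, nsmul_eq_mul]
    ring
  have hmain : ((p : ℝ) - r - 2) *
        (∑ i, ∑ j, G.lapMatrix ℝ i j * (blk Y i * (blk Y j)ᵀ).trace)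
      + (1 / 4) *
        (∑ i, ∑ j, G.adjMatrix ℝ i j * (frobSq (blk W i - blk W j)) ^ 2) =
      - ∑ i, ∑ j, G.lapMatrix ℝ i j *
        (((p : ℝ) - 2) * r + tt Y i j ^ 2 - ((p : ℝ) + r - 2) * tt Y i j) := by
    simp only [trace_blk, hWW]
    rw [lap_sum G (fun i j => tt Y i j), lap_sum G (fun i j =>
      (((p : ℝ) - 2) * r + tt Y i j ^ 2 - ((p : ℝ) + r - 2) * tt Y i j))]
    simp only [Finset.mul_sum, ← Finset.sum_neg_distrib, ← Finset.sum_add_distrib, tt_self hF]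
    refine Finset.sum_congr rfl fun i _ => Finset.sum_congr rfl fun j _ => ?_
    ring
  set D1 := ∑ q, ∑ q', Δ q q' * ((Y * Yᵀ) q q' - if q.2 = q'.2 then 1 else 0) with hD1
  set D2 := ∑ q, ∑ q', Δ q q' * ((r - tt Y q.1 q'.1) * (Y * Yᵀ) q q') with hD2
  have hnoise : ∑ q, ∑ q', Δ q q' * (Tm Y q q' - ((p : ℝ) + r - 2) * (Y * Yᵀ) q q') =
      - (((p : ℝ) - 2) * D1 + D2) := by
    rw [hD1, hD2]
    simp only [Finset.mul_sum, ← Finset.sum_neg_distrib, ← Finset.sum_add_distrib]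
    refine Finset.sum_congr rfl fun q _ => Finset.sum_congr rfl fun q' _ => ?_
    rw [Tm]
    ring
  have hsplit : ∀ q q', Lhat q q' * (Tm Y q q' - ((p : ℝ) + r - 2) * (Y * Yᵀ) q q') =
      ((G.lapMatrix ℝ) ⊗ₖ (1 : Matrix (Fin r) (Fin r) ℝ)) q q' *
        (Tm Y q q' - ((p : ℝ) + r - 2) * (Y * Yᵀ) q q') -
      Δ q q' * (Tm Y q q' - ((p : ℝ) + r - 2) * (Y * Yᵀ) q q') := by
    intro q q'
    rw [hLhat, Matrix.sub_apply, sub_mul]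
  simp only [hsplit, Finset.sum_sub_distrib] at hcrit
  rw [hLpart, hnoise] at hcrit
  rw [hmain, frob_W hn hF R hR W hW]
  have ht1 : D1 ≤ _ := term1 hn hrp Δ hΔsym Y hF R hR
  have ht2 : D2 ≤ _ := term2 hn Δ hΔsym Y hF R hR
  set K := Real.sqrt (r * n) * Real.sqrt (n * (r - frobSq R)) with hK
  have hgoal : ((p : ℝ) - 2) * D1 + D2 ≤ 2 * ((p : ℝ) + r - 2) * opNorm Δ * K := by
    rcases Nat.lt_or_ge p 2 with hp | hp
    · obtain rfl : p = 1 := by omega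
      obtain rfl : r = 1 := by omega
      have : D2 = D1 := by
        rw [hD1, hD2]
        refine Finset.sum_congr rfl fun q _ => Finset.sum_congr rfl fun q' _ => ?_
        obtain ⟨i, a⟩ := q
        obtain ⟨j, b⟩ := q'
        have hi := feas_apply hF i 0 0
        have hj := feas_apply hF j 0 0
        fin_cases a
        fin_cases b
        simp [tt, Matrix.mul_apply] at hi hj ⊢
        left
        linear_combination -(Y (i, 0) 0 * Y (i, 0) 0) * hj - hi
      rw [this]
      push_cast
      linarith
    · have hp' : (0 : ℝ) ≤ (p : ℝ) - 2 := by
        have : (2 : ℝ) ≤ p := by exact_mod_cast hp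
        linarith
      have := mul_le_mul_of_nonneg_left ht1 hp'
      linarith
  rw [mul_assoc (2 * ((p : ℝ) + r - 2) * opNorm Δ), ← hK]
  linarith

end SyncPaper
end

section
/- (Gaussian covariance of random tangent vectors, complex case.) Let Γ ∈ ℂ^{r×p} be a random matrix whose entries are i.i.d. standard complex normal random variables (independent real and imaginary parts, each N(0, 1/2)), and let Y_i, Y_j ∈ ℂ^{r×p} satisfy Y_i Y_i* = Y_j Y_j* = I_r, where * is conjugate transpose. For k ∈ {i,j} set Ẏ_k = 2Γ(I_p − Y_k* Y_k) + (Γ Y_k* − Y_k Γ*) Y_k. Then the entrywise expectation satisfies E[Ẏ_i Ẏ_j*] = (4(p − r) + ‖Y_i Y_j*‖_F²) I_r + tr(Y_i Y_j*) · Y_i Y_j*. -/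
open Matrix MeasureTheory ProbabilityTheory

/-- The standard complex normal distribution on `ℂ`: independent real and imaginary parts,
each `N(0, 1/2)`. -/
noncomputable def stdComplexGaussian : Measure ℂ :=
  ((gaussianReal 0 (1 / 2)).prod (gaussianReal 0 (1 / 2))).map
    Complex.measurableEquivRealProd.symm

/-- The law of an `r × p` random matrix with i.i.d. standard complex normal entries
(entries viewed as functions `Fin r → Fin p → ℂ`). -/
noncomputable def gaussMatComplex (r p : ℕ) : Measure (Fin r → Fin p → ℂ) :=
  Measure.pi fun _ : Fin r => Measure.pi fun _ : Fin p => stdComplexGaussian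

/-- The tangent vector `Ẏ = 2Γ(I_p − Y* Y) + (Γ Y* − Y Γ*) Y` at `Y ∈ St(r,p,ℂ)`. -/
noncomputable def cplxTangent {r p : ℕ} (Y Γ : Matrix (Fin r) (Fin p) ℂ) :
    Matrix (Fin r) (Fin p) ℂ :=
  (2 : ℂ) • (Γ * ((1 : Matrix (Fin p) (Fin p) ℂ) - Yᴴ * Y)) + (Γ * Yᴴ - Y * Γᴴ) * Y

/-- `f` is integrable with integral `v`. -/
def HI {α : Type*} [MeasurableSpace α] (μ : Measure α) (f : α → ℂ) (v : ℂ) : Prop :=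
  Integrable f μ ∧ ∫ x, f x ∂μ = v

namespace HI

variable {α : Type*} [MeasurableSpace α] {μ : Measure α} {f g : α → ℂ} {u v : ℂ}

lemma add (hf : HI μ f u) (hg : HI μ g v) : HI μ (fun x => f x + g x) (u + v) :=
  ⟨hf.1.add hg.1, by rw [integral_add hf.1 hg.1, hf.2, hg.2]⟩

lemma sub (hf : HI μ f u) (hg : HI μ g v) : HI μ (fun x => f x - g x) (u - v) :=
  ⟨hf.1.sub hg.1, by rw [integral_sub hf.1 hg.1, hf.2, hg.2]⟩

lemma const_mul (c : ℂ) (hf : HI μ f u) : HI μ (fun x => c * f x) (c * u) :=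
  ⟨hf.1.const_mul c, by rw [integral_const_mul, hf.2]⟩

lemma mul_const (c : ℂ) (hf : HI μ f u) : HI μ (fun x => f x * c) (u * c) :=
  ⟨hf.1.mul_const c, by rw [integral_mul_const, hf.2]⟩

lemma sum {ι : Type*} (s : Finset ι) {f : ι → α → ℂ} {u : ι → ℂ} (hf : ∀ i, HI μ (f i) (u i)) :
    HI μ (fun x => ∑ i ∈ s, f i x) (∑ i ∈ s, u i) :=
  ⟨integrable_finsetSum s fun i _ => (hf i).1, by
    rw [integral_finsetSum s fun i _ => (hf i).1]
    exact Finset.sum_congr rfl fun i _ => (hf i).2⟩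

lemma congr (hf : HI μ f u) (h : ∀ x, g x = f x) (h2 : v = u) : HI μ g v := by
  have : g = f := funext h
  subst this; subst h2; exact hf

/-- coordinate of a product measure -/
lemma pi_eval {ι : Type*} [Fintype ι] (μ : Measure α) [IsProbabilityMeasure μ] (i : ι)
    (hf : HI μ f u) : HI (Measure.pi fun _ : ι => μ) (fun x => f (x i)) u :=
  ⟨integrable_comp_eval (μ := fun _ : ι => μ) (i := i) hf.1, by
    rw [integral_comp_eval (μ := fun _ : ι => μ) (i := i) hf.1.1, hf.2]⟩

lemma pi_ne {ι : Type*} [Fintype ι] (μ : Measure α) [IsProbabilityMeasure μ] {i j : ι}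
    (hij : i ≠ j) (hf : HI μ f u) (hg : HI μ g v) :
    HI (Measure.pi fun _ : ι => μ) (fun x => f (x i) * g (x j)) (u * v) := by
  classical
  have h1 := hf.pi_eval μ i
  have h2 := hg.pi_eval μ j
  have ind := (iIndepFun_pi (μ := fun _ : ι => μ) (X := fun k => if k = i then f else g)
    (fun k => by
      by_cases h : k = i
      · simpa [h] using hf.1.1.aemeasurable
      · simpa [h] using hg.1.1.aemeasurable)).indepFun hij
  simp only [if_true, if_neg hij.symm] at ind
  exact ⟨ind.integrable_mul h1.1 h2.1, by
    rw [ind.integral_fun_mul_eq_mul_integral h1.1.1 h2.1.1, h1.2, h2.2]⟩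

lemma pi_pair {ι : Type*} [Fintype ι] [DecidableEq ι] (μ : Measure α) [IsProbabilityMeasure μ]
    (i j : ι) {w : ℂ} (hf : HI μ f 0) (hg : HI μ g 0) (hfg : HI μ (fun x => f x * g x) w) :
    HI (Measure.pi fun _ : ι => μ) (fun x => f (x i) * g (x j)) (if i = j then w else 0) := by
  by_cases h : i = j
  · subst h
    simpa using hfg.pi_eval μ i
  · simpa [h] using hf.pi_ne μ h hg

end HI

lemma HI.re_prod {ν ρ : Measure ℝ} [IsProbabilityMeasure ν] [IsProbabilityMeasure ρ] {f g : ℝ → ℝ}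
    (hf : Integrable f ν) (hg : Integrable g ρ) :
    HI (ν.prod ρ) (fun q => ((f q.1 * g q.2 : ℝ) : ℂ)) (((∫ x, f x ∂ν) * ∫ x, g x ∂ρ : ℝ) : ℂ) :=
  ⟨(hf.mul_prod hg).ofReal, by
    rw [← integral_prod_mul]
    exact integral_ofReal⟩

instance : IsProbabilityMeasure stdComplexGaussian :=
  Measure.isProbabilityMeasure_map Complex.measurableEquivRealProd.symm.measurable.aemeasurable

lemma HI.std {f : ℂ → ℂ} {v : ℂ}
    (h : HI ((gaussianReal 0 (1 / 2)).prod (gaussianReal 0 (1 / 2)))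
      (fun q => f (Complex.measurableEquivRealProd.symm q)) v) : HI stdComplexGaussian f v := by
  constructor
  · exact (Complex.measurableEquivRealProd.symm.measurableEmbedding.integrable_map_iff).2 h.1
  · rw [stdComplexGaussian, Complex.measurableEquivRealProd.symm.measurableEmbedding.integral_map]
    exact h.2

lemma gi1 : Integrable (fun x : ℝ => x) (gaussianReal 0 (1 / 2)) :=
  (memLp_id_gaussianReal 1).integrable (by simp)

lemma gi2 : Integrable (fun x : ℝ => x ^ 2) (gaussianReal 0 (1 / 2)) :=
  (memLp_id_gaussianReal 2).integrable_sq

lemma gv2 : ∫ x : ℝ, x ^ 2 ∂(gaussianReal 0 (1 / 2)) = 1 / 2 := by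
  have := variance_fun_id_gaussianReal (μ := 0) (v := 1 / 2)
  rw [variance_eq_integral measurable_id'.aemeasurable] at this
  simpa using this

lemma m10 : HI ((gaussianReal 0 (1 / 2)).prod (gaussianReal 0 (1 / 2)))
    (fun q => ((q.1 : ℝ) : ℂ)) 0 :=
  (HI.re_prod gi1 (integrable_const (1 : ℝ))).congr (by simp) (by simp [integral_id_gaussianReal])

lemma m01 : HI ((gaussianReal 0 (1 / 2)).prod (gaussianReal 0 (1 / 2)))
    (fun q => ((q.2 : ℝ) : ℂ)) 0 :=
  (HI.re_prod (integrable_const (1 : ℝ)) gi1).congr (by simp) (by simp [integral_id_gaussianReal])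

lemma m11 : HI ((gaussianReal 0 (1 / 2)).prod (gaussianReal 0 (1 / 2)))
    (fun q => ((q.1 : ℝ) : ℂ) * ((q.2 : ℝ) : ℂ)) 0 :=
  (HI.re_prod gi1 gi1).congr (by simp) (by simp [integral_id_gaussianReal])

lemma m20 : HI ((gaussianReal 0 (1 / 2)).prod (gaussianReal 0 (1 / 2)))
    (fun q => ((q.1 : ℝ) : ℂ) ^ 2) (1 / 2) :=
  (HI.re_prod gi2 (integrable_const (1 : ℝ))).congr (by simp) (by rw [gv2]; simp)

lemma m02 : HI ((gaussianReal 0 (1 / 2)).prod (gaussianReal 0 (1 / 2)))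
    (fun q => ((q.2 : ℝ) : ℂ) ^ 2) (1 / 2) :=
  (HI.re_prod (integrable_const (1 : ℝ)) gi2).congr (by simp) (by rw [gv2]; simp)

lemma symm_eq (q : ℝ × ℝ) : Complex.measurableEquivRealProd.symm q = q.1 + q.2 * Complex.I := by
  rw [Complex.measurableEquivRealProd_symm_apply]
  exact Complex.mk_eq_add_mul_I _ _

lemma star_symm_eq (q : ℝ × ℝ) :
    star (Complex.measurableEquivRealProd.symm q) = q.1 - q.2 * Complex.I := by
  rw [symm_eq]; simp [sub_eq_add_neg]

lemma sz : HI stdComplexGaussian (fun z => z) 0 :=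
  HI.std ((m10.add (m01.mul_const Complex.I)).congr symm_eq (by simp))

lemma sc : HI stdComplexGaussian (fun z => star z) 0 :=
  HI.std ((m10.sub (m01.mul_const Complex.I)).congr star_symm_eq (by simp))

lemma szz : HI stdComplexGaussian (fun z => z * z) 0 :=
  HI.std (((m20.sub m02).add (m11.const_mul (2 * Complex.I))).congr
    (fun q => by rw [symm_eq]; linear_combination (q.2 : ℂ) ^ 2 * Complex.I_sq) (by simp))

lemma scc : HI stdComplexGaussian (fun z => star z * star z) 0 :=
  HI.std (((m20.sub m02).sub (m11.const_mul (2 * Complex.I))).congr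
    (fun q => by rw [star_symm_eq]; linear_combination (q.2 : ℂ) ^ 2 * Complex.I_sq) (by simp))

lemma szc : HI stdComplexGaussian (fun z => z * star z) 1 :=
  HI.std ((m20.add m02).congr
    (fun q => by
      rw [star_symm_eq, symm_eq]; linear_combination -(q.2 : ℂ) ^ 2 * Complex.I_sq) (by norm_num))

lemma gauss_pair {r p : ℕ} {f g : ℂ → ℂ} {w : ℂ} (hf : HI stdComplexGaussian f 0)
    (hg : HI stdComplexGaussian g 0) (hfg : HI stdComplexGaussian (fun x => f x * g x) w)
    (a b : Fin r) (c d : Fin p) :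
    HI (gaussMatComplex r p) (fun x => f (x a c) * g (x b d))
      (if a = b then if c = d then w else 0 else 0) := by
  unfold gaussMatComplex
  by_cases h : a = b
  · subst h
    simpa using (HI.pi_pair stdComplexGaussian c d hf hg hfg).pi_eval _ a
  · simpa [h] using (hf.pi_eval stdComplexGaussian c).pi_ne _ h (hg.pi_eval stdComplexGaussian d)

/-- Entrywise integrable with given entrywise expectation. -/
def HE {r p m n : ℕ} (F : Matrix (Fin r) (Fin p) ℂ → Matrix (Fin m) (Fin n) ℂ)
    (V : Matrix (Fin m) (Fin n) ℂ) : Prop :=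
  ∀ a b, HI (gaussMatComplex r p) (fun g => F (Matrix.of g) a b) (V a b)

namespace HE

variable {r p m n k : ℕ} {F G : Matrix (Fin r) (Fin p) ℂ → Matrix (Fin m) (Fin n) ℂ}
  {V W : Matrix (Fin m) (Fin n) ℂ}

lemma add (hF : HE F V) (hG : HE G W) : HE (fun g => F g + G g) (V + W) :=
  fun a b => (hF a b).add (hG a b)

lemma sub (hF : HE F V) (hG : HE G W) : HE (fun g => F g - G g) (V - W) :=
  fun a b => (hF a b).sub (hG a b)

lemma mul_left (M : Matrix (Fin k) (Fin m) ℂ) (hF : HE F V) : HE (fun g => M * F g) (M * V) :=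
  fun a b => by
    simp only [Matrix.mul_apply]
    exact HI.sum _ fun i => (hF i b).const_mul _

lemma mul_right (M : Matrix (Fin n) (Fin k) ℂ) (hF : HE F V) : HE (fun g => F g * M) (V * M) :=
  fun a b => by
    simp only [Matrix.mul_apply]
    exact HI.sum _ fun i => (hF a i).mul_const _

lemma gAgH (A : Matrix (Fin p) (Fin p) ℂ) :
    HE (fun g : Matrix (Fin r) (Fin p) ℂ => g * A * gᴴ) (A.trace • 1) := fun a b => by
  refine (HI.sum Finset.univ fun d => HI.sum Finset.univ fun c =>
    (gauss_pair sz sc szc a b c d).const_mul (A c d)).congr (fun g => ?_) ?_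
  · simp only [Matrix.mul_apply, Finset.sum_mul, Matrix.conjTranspose_apply, Matrix.of_apply]
    exact Finset.sum_congr rfl fun d _ => Finset.sum_congr rfl fun c _ => by ring
  · by_cases h : a = b <;> simp [h, Matrix.trace, Matrix.one_apply]

lemma gHAg (A : Matrix (Fin r) (Fin r) ℂ) :
    HE (fun g : Matrix (Fin r) (Fin p) ℂ => gᴴ * A * g) (A.trace • 1) := fun a b => by
  refine (HI.sum Finset.univ fun d => HI.sum Finset.univ fun c =>
    (gauss_pair sz sc szc d c b a).const_mul (A c d)).congr (fun g => ?_) ?_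
  · simp only [Matrix.mul_apply, Finset.sum_mul, Matrix.conjTranspose_apply, Matrix.of_apply]
    exact Finset.sum_congr rfl fun d _ => Finset.sum_congr rfl fun c _ => by ring
  · by_cases h : b = a
    · simp [h, Matrix.trace, Matrix.one_apply]
    · simp [h, Ne.symm h, Matrix.trace, Matrix.one_apply]

lemma gAg (A : Matrix (Fin p) (Fin r) ℂ) :
    HE (fun g : Matrix (Fin r) (Fin p) ℂ => g * A * g) 0 := fun a b => by
  refine (HI.sum Finset.univ fun d => HI.sum Finset.univ fun c =>
    (gauss_pair sz sz szz a d c b).const_mul (A c d)).congr (fun g => ?_) ?_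
  · simp only [Matrix.mul_apply, Finset.sum_mul, Matrix.of_apply]
    exact Finset.sum_congr rfl fun d _ => Finset.sum_congr rfl fun c _ => by ring
  · simp

lemma gHAgH (A : Matrix (Fin r) (Fin p) ℂ) :
    HE (fun g : Matrix (Fin r) (Fin p) ℂ => gᴴ * A * gᴴ) 0 := fun a b => by
  refine (HI.sum Finset.univ fun d => HI.sum Finset.univ fun c =>
    (gauss_pair sc sc scc c b a d).const_mul (A c d)).congr (fun g => ?_) ?_
  · simp only [Matrix.mul_apply, Finset.sum_mul, Matrix.conjTranspose_apply, Matrix.of_apply]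
    exact Finset.sum_congr rfl fun d _ => Finset.sum_congr rfl fun c _ => by ring
  · simp

end HE

lemma tangent_mul {r p : ℕ} (Yi Yj g : Matrix (Fin r) (Fin p) ℂ) :
    cplxTangent Yi g * (cplxTangent Yj g)ᴴ =
      g * (((2 : ℂ) • 1 - Yiᴴ * Yi) * ((2 : ℂ) • 1 - Yjᴴ * Yj)) * gᴴ
      - (g * (((2 : ℂ) • 1 - Yiᴴ * Yi) * Yjᴴ) * g) * Yjᴴ
      - Yi * (gᴴ * (Yi * ((2 : ℂ) • 1 - Yjᴴ * Yj)) * gᴴ)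
      + Yi * (gᴴ * (Yi * Yjᴴ) * g) * Yjᴴ := by
  have h : ∀ Y : Matrix (Fin r) (Fin p) ℂ,
      cplxTangent Y g = g * ((2 : ℂ) • 1 - Yᴴ * Y) - Y * gᴴ * Y := by
    intro Y
    simp only [cplxTangent, two_smul, Matrix.mul_sub, Matrix.sub_mul, Matrix.mul_add,
      Matrix.mul_one, Matrix.mul_assoc]
    abel
  have h2 : ((2 : ℂ) • (1 : Matrix (Fin p) (Fin p) ℂ) - Yjᴴ * Yj)ᴴ
      = (2 : ℂ) • 1 - Yjᴴ * Yj := by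
    simp [Matrix.conjTranspose_sub, Matrix.conjTranspose_mul, Matrix.conjTranspose_smul]
  rw [h, h, Matrix.conjTranspose_sub, Matrix.conjTranspose_mul, h2]
  generalize (2 : ℂ) • (1 : Matrix (Fin p) (Fin p) ℂ) - Yjᴴ * Yj = B
  generalize (2 : ℂ) • (1 : Matrix (Fin p) (Fin p) ℂ) - Yiᴴ * Yi = A
  simp only [Matrix.conjTranspose_mul, Matrix.conjTranspose_conjTranspose, Matrix.mul_sub,
    Matrix.sub_mul, Matrix.mul_assoc]
  abel

lemma trace_val {r p : ℕ} (Yi Yj : Matrix (Fin r) (Fin p) ℂ)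
    (hYi : Yi * Yiᴴ = 1) (hYj : Yj * Yjᴴ = 1) :
    (((2 : ℂ) • (1 : Matrix (Fin p) (Fin p) ℂ) - Yiᴴ * Yi) * ((2 : ℂ) • 1 - Yjᴴ * Yj)).trace
      = 4 * ((p : ℂ) - (r : ℂ))
              + ((∑ a', ∑ b', Complex.normSq ((Yi * Yjᴴ) a' b') : ℝ) : ℂ) := by
  have e1 : (Yiᴴ * Yi).trace = r := by rw [Matrix.trace_mul_comm, hYi]; simp
  have e2 : (Yjᴴ * Yj).trace = r := by rw [Matrix.trace_mul_comm, hYj]; simp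
  have e3 : (Yiᴴ * Yi * (Yjᴴ * Yj)).trace
      = ((∑ a', ∑ b', Complex.normSq ((Yi * Yjᴴ) a' b') : ℝ) : ℂ) := by
    have : (Yiᴴ * Yi * (Yjᴴ * Yj)).trace = ((Yi * Yjᴴ) * (Yi * Yjᴴ)ᴴ).trace := by
      rw [Matrix.mul_assoc, Matrix.trace_mul_comm, Matrix.conjTranspose_mul,
        Matrix.conjTranspose_conjTranspose]
      simp only [Matrix.mul_assoc]
    rw [this]
    generalize Yi * Yjᴴ = C
    simp only [Matrix.trace, Matrix.diag, Matrix.mul_apply, Matrix.conjTranspose_apply]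
    push_cast
    exact Finset.sum_congr rfl fun a _ => Finset.sum_congr rfl fun b _ => Complex.mul_conj _
  simp only [Matrix.mul_sub, Matrix.sub_mul, Matrix.trace_sub, e3, smul_mul_assoc, mul_smul_comm,
    Matrix.one_mul, Matrix.mul_one, Matrix.trace_smul, e1, e2, Matrix.trace_one, Fintype.card_fin,
    smul_eq_mul]
  ring

/-- **Gaussian covariance of random tangent vectors (complex case).**  If `Γ` has i.i.d.
standard complex normal entries and `Y_i Y_i* = Y_j Y_j* = I_r`, then, with
`Ẏ_k = 2Γ(I_p − Y_k* Y_k) + (Γ Y_k* − Y_k Γ*) Y_k`,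
`E[Ẏ_i Ẏ_j*] = (4(p − r) + ‖Y_i Y_j*‖_F²) I_r + tr(Y_i Y_j*) Y_i Y_j*` entrywise. -/
theorem complex_gaussian_tangent_covariance
    (r p : ℕ) (hr : 1 ≤ r) (hrp : r ≤ p)
    (Yi Yj : Matrix (Fin r) (Fin p) ℂ)
    (hYi : Yi * Yiᴴ = 1) (hYj : Yj * Yjᴴ = 1) :
    ∀ a b : Fin r,
      (∫ g : Fin r → Fin p → ℂ,
          ((cplxTangent Yi (Matrix.of g) * (cplxTangent Yj (Matrix.of g))ᴴ) a b)
          ∂(gaussMatComplex r p))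
        = ((4 * ((p : ℂ) - (r : ℂ))
              + ((∑ a', ∑ b', Complex.normSq ((Yi * Yjᴴ) a' b') : ℝ) : ℂ)) •
              (1 : Matrix (Fin r) (Fin r) ℂ)
            + (Yi * Yjᴴ).trace • (Yi * Yjᴴ)) a b := by
  intro a b
  have H := ((((HE.gAgH (r := r) (((2 : ℂ) • (1 : Matrix (Fin p) (Fin p) ℂ) - Yiᴴ * Yi)
      * ((2 : ℂ) • 1 - Yjᴴ * Yj))).sub
    ((HE.gAg (((2 : ℂ) • (1 : Matrix (Fin p) (Fin p) ℂ) - Yiᴴ * Yi) * Yjᴴ)).mul_right Yjᴴ)).sub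
    ((HE.gHAgH (Yi * ((2 : ℂ) • 1 - Yjᴴ * Yj))).mul_left Yi)).add
    (((HE.gHAg (Yi * Yjᴴ)).mul_left Yi).mul_right Yjᴴ)) a b
  simp only [tangent_mul]
  rw [H.2, trace_val Yi Yj hYi hYj]
  simp
end
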